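/- arXiv:1901.03168 — 3 statements merged into one kernel-verified Lean document; each statement's English description precedes it below -/
import Mathlib

section
/- Let A be an associative unital ring and T a classical 1-tilting left A-module. Set KE_0(T) = {X ∈ A-Mod : Ext_A^1(T,X) = 0} and KE_1(T) = {X ∈ A-Mod : Hom_A(T,X) = 0}. Then (KE_0(T), KE_1(T)) is a torsion pair in A-Mod: Hom_A(X,Y) = 0 for every X ∈ KE_0(T) and Y ∈ KE_1(T), and every left A-module M fits into a short exact sequence 0 → tM → M → M/tM → 0 with tM ∈ KE_0(T) and M/tM ∈ KE_1(T). -/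
set_option maxHeartbeats 1000000
set_option synthInstance.maxHeartbeats 400000
open CategoryTheory Limits
universe u
variable (A : Type u) [Ring A]
noncomputable instance : HasDerivedCategory (ModuleCat.{u} A) := HasDerivedCategory.standard _
instance : HasExt.{u+1} (ModuleCat.{u} A) := hasExt_of_hasDerivedCategory _

/-- `X` is a direct summand of a coproduct of copies of `T`. -/
def IsSummandOfCopies (T X : Type u) [AddCommGroup T] [Module A T]
    [AddCommGroup X] [Module A X] : Prop :=
  ∃ (ι : Type u) (s : X →ₗ[A] (ι →₀ T)) (r : (ι →₀ T) →ₗ[A] X),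
    r.comp s = LinearMap.id

/-- `T` is a classical `n`-tilting left `A`-module. -/
structure IsClassicalTilting (T : Type u) [AddCommGroup T] [Module A T] (n : ℕ) : Prop where
  /-- `p_n`: a projective resolution of length `n` by finitely generated projectives -/
  proj_res : ∃ pr : ProjectiveResolution (ModuleCat.of A T),
      (∀ i, Module.Finite A (pr.complex.X i)) ∧ ∀ i, n < i → IsZero (pr.complex.X i)
  /-- `e_n`: rigidity -/
  rigid : ∀ i, 0 < i → i ≤ n →
      Subsingleton (Abelian.Ext (ModuleCat.of A T) (ModuleCat.of A T) i)
  /-- `g_n`: a coresolution `0 → A → T_0 → ⋯ → T_n → 0` by finitely generated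
  direct summands of coproducts of copies of `T` -/
  cores : ∃ S : ComposableArrows (ModuleCat.{u} A) (n+3),
      S.Exact ∧ IsZero (S.obj' 0) ∧ IsZero (S.obj' (n+3)) ∧
      S.obj' 1 = ModuleCat.of A A ∧
      ∀ i, (h : i ≤ n) → Module.Finite A (S.obj' (i+2) (by omega)) ∧
        IsSummandOfCopies A T (S.obj' (i+2) (by omega))

section TiltingHelpers

open Abelian

/-- Maps out of `P1` extend along `f`. -/
def TiltExtends {P1 P0 : Type u} [AddCommGroup P1] [Module A P1] [AddCommGroup P0] [Module A P0]
    (f : P1 →ₗ[A] P0) (X : Type u) [AddCommGroup X] [Module A X] : Prop :=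
  ∀ g : P1 →ₗ[A] X, ∃ h : P0 →ₗ[A] X, h.comp f = g

theorem tilt_ext_iff (S : ShortComplex (ModuleCat.{u} A)) (hS : S.ShortExact)
    [Projective S.X₂] (X : Type u) [AddCommGroup X] [Module A X] :
    Subsingleton (Ext S.X₃ (ModuleCat.of A X) 1) ↔ TiltExtends A S.f.hom X := by
  constructor
  · intro hs g
    obtain ⟨x2, hx2⟩ := Ext.contravariant_sequence_exact₁ hS (ModuleCat.of A X)
      (Ext.mk₀ (ModuleCat.ofHom g)) (add_zero 1) (Subsingleton.elim _ _)
    obtain ⟨h, rfl⟩ := (Ext.mk₀_bijective _ _).2 x2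
    rw [Ext.mk₀_comp_mk₀] at hx2
    have := (Ext.mk₀_bijective _ _).1 hx2
    refine ⟨h.hom, ?_⟩
    rw [← ModuleCat.hom_comp, this]
    rfl
  · intro H
    refine subsingleton_of_forall_eq 0 fun x => ?_
    obtain ⟨x1, rfl⟩ := Ext.contravariant_sequence_exact₃ hS (ModuleCat.of A X) x
      (Ext.eq_zero_of_projective _) (add_zero 1)
    obtain ⟨g, rfl⟩ := (Ext.mk₀_bijective _ _).2 x1
    obtain ⟨h, hh⟩ := H g.hom
    have : g = S.f ≫ ModuleCat.ofHom h := by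
      ext x
      exact (LinearMap.congr_fun hh x).symm
    rw [this, ← Ext.mk₀_comp_mk₀, hS.extClass_comp_assoc]

theorem tilt_presentation (T : Type u) [AddCommGroup T] [Module A T]
    (hT : IsClassicalTilting A T 1) :
    ∃ (P1 P0 : ModuleCat.{u} A) (f : P1 ⟶ P0) (p : P0 ⟶ ModuleCat.of A T) (w : f ≫ p = 0),
      (ShortComplex.mk f p w).ShortExact ∧ Projective P1 ∧ Projective P0 ∧ Module.Finite A P1 := by
  obtain ⟨pr, hfin, hz⟩ := hT.proj_res
  refine ⟨pr.complex.X 1, pr.complex.X 0, pr.complex.d 1 0, pr.π.f 0,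
    pr.complex_d_comp_π_f_zero, ?_, pr.projective 1, pr.projective 0, hfin 1⟩
  have h1 : Mono (pr.complex.d 1 0) :=
    (pr.exact_succ 0).mono_g ((hz 2 (by norm_num)).eq_of_src _ _)
  have h2 : Epi (pr.π.f 0) := inferInstance
  exact { exact := pr.exact₀, mono_f := h1, epi_g := h2 }

theorem tilt_cores (T : Type u) [AddCommGroup T] [Module A T]
    (hT : IsClassicalTilting A T 1) :
    ∃ (B C : ModuleCat.{u} A) (i : A →ₗ[A] B) (p : B →ₗ[A] C), Function.Injective i ∧
      Function.Exact i p ∧ Function.Surjective p ∧ IsSummandOfCopies A T B ∧ IsSummandOfCopies A T C := by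
  obtain ⟨S, hS, h0, h4, h1, hs⟩ := hT.cores
  let e : ModuleCat.of A A ≅ S.obj' 1 := eqToIso h1.symm
  have hm : Mono (S.map' 1 2) := (hS.exact 0).mono_g (h0.eq_of_src _ _)
  have he : Epi (S.map' 2 3) := (hS.exact 2).epi_f (h4.eq_of_tgt _ _)
  have hex := (ShortComplex.ShortExact.moduleCat_exact_iff_function_exact _).1 (hS.exact 1)
  refine ⟨S.obj' 2, S.obj' 3, (e.hom ≫ S.map' 1 2).hom, (S.map' 2 3).hom, ?_, ?_,
    (ModuleCat.epi_iff_surjective _).1 he,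
    (hs 0 (by norm_num)).2, (hs 1 (by norm_num)).2⟩
  · exact (ModuleCat.mono_iff_injective _).1 inferInstance
  · intro b
    rw [show (S.map' 2 3).hom b = 0 ↔ _ from hex b]
    constructor
    · rintro ⟨a, rfl⟩
      refine ⟨e.inv.hom a, ?_⟩
      change (S.map' 1 2).hom (e.hom.hom (e.inv.hom a)) = _
      have hea : e.hom.hom (e.inv.hom a) = a := by
        rw [← LinearMap.comp_apply, ← ModuleCat.hom_comp, e.inv_hom_id]
        rfl
      rw [hea]
    · rintro ⟨a, rfl⟩
      exact ⟨e.hom.hom a, rfl⟩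

variable {A}
variable {P1 P0 T : Type u} [AddCommGroup P1] [Module A P1] [AddCommGroup P0] [Module A P0]
  [AddCommGroup T] [Module A T]

theorem tilt_quot [Module.Projective A P1] (f : P1 →ₗ[A] P0) {X Y : Type u}
    [AddCommGroup X] [Module A X] [AddCommGroup Y] [Module A Y] (q : X →ₗ[A] Y)
    (hq : Function.Surjective q) (hX : TiltExtends A f X) : TiltExtends A f Y := by
  intro g
  obtain ⟨g', hg'⟩ := Module.projective_lifting_property q g hq
  obtain ⟨h, hh⟩ := hX g'
  exact ⟨q.comp h, by rw [LinearMap.comp_assoc, hh, hg']⟩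

theorem tilt_finsupp [Module.Finite A P1] (f : P1 →ₗ[A] P0) (hT : TiltExtends A f T)
    (ι : Type u) : TiltExtends A f (ι →₀ T) := by
  classical
  intro g
  obtain ⟨s, hs⟩ := (Module.Finite.fg_top : (⊤ : Submodule A P1).FG)
  let K : Finset ι := s.biUnion fun x => (g x).support
  have hK : ∀ x, g x ∈ Finsupp.supported T A (K : Set ι) := by
    intro x
    have : (⊤ : Submodule A P1) ≤ (Finsupp.supported T A (K : Set ι)).comap g := by
      rw [← hs, Submodule.span_le]
      intro y hy
      change g y ∈ Finsupp.supported T A (K : Set ι)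
      rw [Finsupp.mem_supported]
      exact_mod_cast Finset.subset_biUnion_of_mem (fun x => (g x).support) hy
    exact this trivial
  choose h hh using fun i => hT ((Finsupp.lapply i).comp g)
  refine ⟨∑ i ∈ K, (Finsupp.lsingle i).comp (h i), ?_⟩
  ext x j
  have hj : ∀ i, h i (f x) = g x i := fun i => LinearMap.congr_fun (hh i) x
  simp only [LinearMap.comp_apply, LinearMap.sum_apply, Finsupp.lsingle_apply, hj,
    Finsupp.finsetSum_apply, Finsupp.single_apply, Finset.sum_ite_eq']
  split_ifs with hjK
  · rfl
  · have := (Finsupp.mem_supported A (g x)).1 (hK x)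
    by_contra hne
    exact hjK (by exact_mod_cast this (Finsupp.mem_support_iff.2 (Ne.symm hne)))

/-- The trace of `T` in `M`. -/
noncomputable def tiltTrace (T M : Type u) [AddCommGroup T] [Module A T] [AddCommGroup M]
    [Module A M] : ((T →ₗ[A] M) →₀ T) →ₗ[A] M :=
  Finsupp.lsum ℕ fun g => g

theorem tilt_quot_hom [Module.Projective A P0] (f : P1 →ₗ[A] P0) (p : P0 →ₗ[A] T)
    (hfp : Function.Exact f p) (hp : Function.Surjective p)
    (M : Type u) [AddCommGroup M] [Module A M]
    (N : Submodule A M) (hN : N = LinearMap.range (tiltTrace (A := A) T M))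
    (hM : TiltExtends A f N) (g : T →ₗ[A] (M ⧸ N)) : g = 0 := by
  obtain ⟨k, hk⟩ := Module.projective_lifting_property N.mkQ (g.comp p) N.mkQ_surjective
  have hkN : ∀ x, k (f x) ∈ N := by
    intro x
    rw [← Submodule.Quotient.mk_eq_zero, ← Submodule.mkQ_apply, ← LinearMap.comp_apply, hk,
      LinearMap.comp_apply, hfp.apply_apply_eq_zero, map_zero]
  obtain ⟨h, hh⟩ := hM ((k.comp f).codRestrict N hkN)
  have hker : LinearMap.ker p ≤ LinearMap.ker (k - N.subtype.comp h) := by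
    intro y hy
    obtain ⟨x, rfl⟩ := (hfp y).1 hy
    have := congrArg Subtype.val (LinearMap.congr_fun hh x)
    simp only [LinearMap.comp_apply, LinearMap.codRestrict_apply] at this
    simp [this]
  ext t
  obtain ⟨y, rfl⟩ := hp t
  let e := p.quotKerEquivOfSurjective hp
  let g' : T →ₗ[A] M := ((LinearMap.ker p).liftQ _ hker).comp e.symm.toLinearMap
  have hg' : g' (p y) = k y - h y := by
    have : e.symm (p y) = Submodule.Quotient.mk y := by
      rw [LinearEquiv.symm_apply_eq]; rfl
    change (LinearMap.ker p).liftQ _ hker (e.symm (p y)) = _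
    rw [this]; rfl
  have hmem : g' (p y) ∈ N := by
    rw [hN]
    exact ⟨Finsupp.single g' (p y), by simp [tiltTrace]⟩
  have hky : k y ∈ N := by
    have := N.add_mem hmem (h y).2
    rwa [hg', sub_add_cancel] at this
  rw [← LinearMap.comp_apply, ← hk]
  simpa using hky

theorem tilt_extend [Module.Projective A P0] (f : P1 →ₗ[A] P0) (p : P0 →ₗ[A] T)
    (hfp : Function.Exact f p) (hp : Function.Surjective p)
    {X B C : Type u} [AddCommGroup X] [Module A X] [AddCommGroup B] [Module A B]
    [AddCommGroup C] [Module A C] (hX : TiltExtends A f X)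
    (i : A →ₗ[A] B) (q : B →ₗ[A] C) (hi : Function.Injective i) (hiq : Function.Exact i q)
    (hq : Function.Surjective q) (hC : IsSummandOfCopies A T C) (u : A →ₗ[A] X) :
    ∃ v : B →ₗ[A] X, v.comp i = u := by
  obtain ⟨ι, s, r, hrs⟩ := hC
  let F : (ι →₀ P1) →ₗ[A] (ι →₀ P0) := Finsupp.mapRange.linearMap f
  let G : (ι →₀ P0) →ₗ[A] (ι →₀ T) := Finsupp.mapRange.linearMap p
  have hG : Function.Surjective G := Finsupp.mapRange_surjective _ (map_zero p) hp
  have hFG : ∀ y, G y = 0 → ∃ x, F x = y := by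
    intro y hy
    have : ∀ j, ∃ x, f x = y j := fun j => (hfp _).1 (by
      have := DFunLike.congr_fun hy j
      simpa [G] using this)
    choose c hc using this
    classical
    refine ⟨Finsupp.onFinset y.support (fun j => if y j = 0 then 0 else c j) ?_, ?_⟩
    · intro j hj
      rw [Finsupp.mem_support_iff]
      intro h0
      exact hj (if_pos h0)
    · ext j
      by_cases h0 : y j = 0 <;> simp [F, h0, hc]
  have hGF : ∀ x, G (F x) = 0 := by
    intro x; ext j; simp [F, G, hfp.apply_apply_eq_zero]
  choose k0 hk0 using fun j =>
    Module.projective_lifting_property q ((r.comp G).comp (Finsupp.lsingle j)) hq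
  let k : (ι →₀ P0) →ₗ[A] B := Finsupp.lsum ℕ k0
  have hk : q.comp k = r.comp G := by
    refine Finsupp.lhom_ext' fun j => ?_
    rw [← hk0]
    ext x
    simp [k]
  have hkr : ∀ x, k (F x) ∈ LinearMap.range i := by
    intro x
    refine (hiq _).1 ?_
    have := LinearMap.congr_fun hk (F x)
    simpa [hGF] using this
  let k' : (ι →₀ P1) →ₗ[A] A :=
    (LinearEquiv.ofInjective i hi).symm.toLinearMap.comp ((k.comp F).codRestrict _ hkr)
  have hk' : ∀ x, i (k' x) = k (F x) := by
    intro x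
    have := LinearEquiv.apply_symm_apply (LinearEquiv.ofInjective i hi)
      ((k.comp F).codRestrict _ hkr x)
    exact congrArg Subtype.val this
  choose h0 hh0 using fun j => hX ((u.comp k').comp (Finsupp.lsingle j))
  let h : (ι →₀ P0) →ₗ[A] X := Finsupp.lsum ℕ h0
  have hh : h.comp F = u.comp k' := by
    refine Finsupp.lhom_ext' fun j => ?_
    rw [← hh0]
    ext x
    simp [h, F]
  let φ : (A × (ι →₀ P0)) →ₗ[A] (B × (ι →₀ T)) :=
    (i.coprod k).prod (G.comp (LinearMap.snd A A _))
  let ψ : (A × (ι →₀ P0)) →ₗ[A] X := u.coprod h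
  have hker : LinearMap.ker φ ≤ LinearMap.ker ψ := by
    rintro ⟨a, y⟩ hay
    have h1 : i a + k y = 0 := congrArg Prod.fst hay
    have h2 : G y = 0 := congrArg Prod.snd hay
    obtain ⟨x, rfl⟩ := hFG y h2
    have h3 : a + k' x = 0 := hi (by rw [map_add, hk', h1, map_zero])
    change u a + h (F x) = 0
    rw [show h (F x) = u (k' x) from LinearMap.congr_fun hh x, ← map_add, h3, map_zero]
  let e := φ.quotKerEquivRange
  let w : LinearMap.range φ →ₗ[A] X := ((LinearMap.ker φ).liftQ ψ hker).comp e.symm.toLinearMap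
  have hw : ∀ z, w ⟨φ z, z, rfl⟩ = ψ z := by
    intro z
    have : e.symm ⟨φ z, z, rfl⟩ = Submodule.Quotient.mk z := by
      rw [LinearEquiv.symm_apply_eq]; rfl
    change (LinearMap.ker φ).liftQ ψ hker (e.symm _) = _
    rw [this]; rfl
  let m : B →ₗ[A] (B × (ι →₀ T)) := LinearMap.id.prod (s.comp q)
  have hm : ∀ b, m b ∈ LinearMap.range φ := by
    intro b
    obtain ⟨y, hy⟩ := hG (s (q b))
    have : q (b - k y) = 0 := by
      have h1 := LinearMap.congr_fun hk y
      have h2 := LinearMap.congr_fun hrs (q b)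
      simp only [LinearMap.comp_apply, LinearMap.id_apply] at h1 h2
      rw [map_sub, h1, hy, h2, sub_self]
    obtain ⟨a, ha⟩ := (hiq _).1 this
    refine ⟨(a, y), Prod.ext ?_ hy⟩
    change i a + k y = b
    rw [ha, sub_add_cancel]
  refine ⟨w.comp (m.codRestrict _ hm), LinearMap.ext fun a => ?_⟩
  have : m.codRestrict _ hm (i a) = ⟨φ (a, 0), _, rfl⟩ := by
    apply Subtype.ext
    change (i a, s (q (i a))) = (i a + k 0, G 0)
    simp [hiq.apply_apply_eq_zero]
  change w (m.codRestrict _ hm (i a)) = _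
  rw [this, hw]
  simp [ψ]

end TiltingHelpers

/-- For a classical 1-tilting module `T`, the pair
`(KE_0(T), KE_1(T))` is a torsion pair in `A`-Mod. -/
theorem stmt0 (T : Type u) [AddCommGroup T] [Module A T]
    (hT : IsClassicalTilting A T 1) :
    -- Hom-vanishing: `Hom_A(X, Y) = 0` for `X ∈ KE_0(T)`, `Y ∈ KE_1(T)`
    (∀ (X Y : Type u) [AddCommGroup X] [Module A X] [AddCommGroup Y] [Module A Y],
        Subsingleton (Abelian.Ext (ModuleCat.of A T) (ModuleCat.of A X) 1) →
        (∀ g : T →ₗ[A] Y, g = 0) →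
        ∀ f : X →ₗ[A] Y, f = 0) ∧
    -- decomposition: every `M` has a submodule `tM ∈ KE_0(T)` with `M/tM ∈ KE_1(T)`
    (∀ (M : Type u) [AddCommGroup M] [Module A M],
        ∃ tM : Submodule A M,
          Subsingleton (Abelian.Ext (ModuleCat.of A T) (ModuleCat.of A tM) 1) ∧
          (∀ g : T →ₗ[A] (M ⧸ tM), g = 0)) := by
  obtain ⟨P1, P0, f, p, w, hS, hP1, hP0, hfin⟩ := tilt_presentation A T hT
  have hP1' : Module.Projective A P1 := (IsProjective.iff_projective _).2 hP1
  have hP0' : Module.Projective A P0 := (IsProjective.iff_projective _).2 hP0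
  have hE : ∀ (X : Type u) [AddCommGroup X] [Module A X],
      Subsingleton (Abelian.Ext (ModuleCat.of A T) (ModuleCat.of A X) 1) ↔
        TiltExtends A f.hom X := fun X _ _ =>
    tilt_ext_iff A (ShortComplex.mk f p w) hS X
  have hfp : Function.Exact f.hom p.hom :=
    (ShortComplex.ShortExact.moduleCat_exact_iff_function_exact _).1 hS.exact
  have hp : Function.Surjective p.hom := (ModuleCat.epi_iff_surjective _).1 hS.epi_g
  have hTT : TiltExtends A f.hom T := (hE T).1 (hT.rigid 1 one_pos le_rfl)
  refine ⟨?_, ?_⟩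
  · intro X Y _ _ _ _ hX hY g
    obtain ⟨B, C, i, q, hi, hiq, hq, hB, hC⟩ := tilt_cores A T hT
    obtain ⟨ι, s, r, hrs⟩ := hB
    ext x
    obtain ⟨v, hv⟩ := tilt_extend f.hom p.hom hfp hp ((hE X).1 hX) i q hi hiq hq hC
      (LinearMap.toSpanSingleton A X x)
    have h0 : (g.comp v).comp r = 0 := by
      refine Finsupp.lhom_ext' fun j => ?_
      rw [hY (((g.comp v).comp r).comp (Finsupp.lsingle j)), LinearMap.zero_comp]
    have h1 : v (i 1) = x := by
      have := LinearMap.congr_fun hv 1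
      simpa using this
    have h2 : r (s (i 1)) = i 1 := LinearMap.congr_fun hrs (i 1)
    have h3 := LinearMap.congr_fun h0 (s (i 1))
    simp only [LinearMap.comp_apply, h2, h1] at h3
    exact h3
  · intro M _ _
    have hN : TiltExtends A f.hom (LinearMap.range (tiltTrace (A := A) T M)) :=
      tilt_quot f.hom (tiltTrace (A := A) T M).rangeRestrict
        (LinearMap.surjective_rangeRestrict _) (tilt_finsupp f.hom hTT _)
    exact ⟨_, (hE _).2 hN, fun g => tilt_quot_hom f.hom p.hom hfp hp M _ rfl hN g⟩
end

section
/- Let A be an associative unital ring, T an n-tilting left A-module, (T^{≤0}, T^{≥0}) the associated t-structure on D(A) and (D^{≤0}, D^{≥0}) the natural t-structure. Then D^{≤-n} ⊆ T^{≤0} ⊆ D^{≤0} and D^{≥0} ⊆ T^{≥0} ⊆ D^{≥-n}. -/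
set_option maxHeartbeats 1000000
set_option synthInstance.maxHeartbeats 400000
open CategoryTheory Limits Triangulated Pretriangulated
universe u
variable (A : Type u) [Ring A]
/-- The derived category `D(A)` of `A`-Mod. -/
abbrev DA := DerivedCategory (ModuleCat.{u} A)

variable (T : Type u) [AddCommGroup T] [Module A T]

/-- `T`, viewed as the complex `T[0]` in `D(A)`. -/
noncomputable def Tsingle : DA A :=
  (DerivedCategory.singleFunctor (ModuleCat.{u} A) 0).obj (ModuleCat.of A T)

/-- `T` is an `n`-tilting module (not necessarily classical):
`(P_n)` the projective dimension of `T` is at most `n`;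
`(E_n)` `Ext_A^i(T, T^{(Λ)}) = 0` for `0 < i ≤ n` and every set `Λ`;
`(G_n)` `T` generates `D(A)`. -/
structure IsTilting (n : ℕ) : Prop where
  pdim : ∃ pr : ProjectiveResolution (ModuleCat.of A T),
      ∀ i, n < i → IsZero (pr.complex.X i)
  rigid : ∀ i : ℕ, 0 < i → i ≤ n → ∀ Λ : Type u,
      Subsingleton (Abelian.Ext (ModuleCat.of A T) (ModuleCat.of A (Λ →₀ T)) i)
  generates : ∀ X : DA A, (∀ i : ℤ, ∀ f : Tsingle A T ⟶ X⟦i⟧, f = 0) → IsZero X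

/-- Membership in `T^{≤k}`: `Hom_{D(A)}(T, X[i]) = 0` for every `i > k`. -/
def tLE (k : ℤ) (X : DA A) : Prop :=
  ∀ i : ℤ, k < i → ∀ f : Tsingle A T ⟶ X⟦i⟧, f = 0

/-- Membership in `T^{≥k}`: `Hom_{D(A)}(T, X[i]) = 0` for every `i < k`. -/
def tGE (k : ℤ) (X : DA A) : Prop :=
  ∀ i : ℤ, i < k → ∀ f : Tsingle A T ⟶ X⟦i⟧, f = 0

/-- Membership in `D^{≤k}` for the natural t-structure:
`H^i(X) = 0` for every `i > k`. -/
def dLE (k : ℤ) (X : DA A) : Prop :=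
  ∀ i : ℤ, k < i →
    IsZero ((DerivedCategory.homologyFunctor (ModuleCat.{u} A) i).obj X)

/-- Membership in `D^{≥k}` for the natural t-structure:
`H^i(X) = 0` for every `i < k`. -/
def dGE (k : ℤ) (X : DA A) : Prop :=
  ∀ i : ℤ, i < k →
    IsZero ((DerivedCategory.homologyFunctor (ModuleCat.{u} A) i).obj X)


namespace TiltAux

open DerivedCategory

section sumFunctor

variable {A}

/-- The exact functor `M ↦ M^{(Λ)}`. -/
noncomputable def sumF (Λ : Type u) : ModuleCat.{u} A ⥤ ModuleCat.{u} A where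
  obj M := ModuleCat.of A (Λ →₀ M)
  map f := ModuleCat.ofHom (Finsupp.mapRange.linearMap f.hom)
  map_id M := by
    ext : 1
    exact Finsupp.mapRange.linearMap_id
  map_comp f g := by
    ext : 1
    exact Finsupp.mapRange.linearMap_comp g.hom f.hom

instance (Λ : Type u) : (sumF (A := A) Λ).Additive where
  map_add {M N f g} := by
    ext : 1
    refine LinearMap.ext fun x => Finsupp.ext fun i => ?_
    rfl

lemma sum_exact_aux (Λ : Type u) {M N K : Type u} [AddCommGroup M] [AddCommGroup N]
    [AddCommGroup K] [Module A M] [Module A N] [Module A K] (f : M →ₗ[A] N) (g : N →ₗ[A] K)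
    (hS : ∀ x, g x = 0 → ∃ y, f y = x) (x : Λ →₀ N)
    (hx : Finsupp.mapRange.linearMap g x = 0) :
    ∃ y : Λ →₀ M, Finsupp.mapRange.linearMap f y = x := by
  have hx' : ∀ l, g (x l) = 0 := fun l => DFunLike.congr_fun hx l
  choose y hy using fun l => hS _ (hx' l)
  classical
  let z : Λ →₀ M := Finsupp.onFinset x.support
    (fun l => if x l = 0 then 0 else y l) (fun l hl => by
      rw [Finsupp.mem_support_iff]
      intro h
      simp [h] at hl)
  refine ⟨z, ?_⟩
  refine Finsupp.ext fun l => ?_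
  change f (z l) = x l
  by_cases h : x l = 0
  · simp [z, h]
  · simp only [z, Finsupp.onFinset_apply, h, if_false]
    exact hy l

instance (Λ : Type u) : (sumF (A := A) Λ).PreservesHomology := by
  apply CategoryTheory.Functor.preservesHomology_of_map_exact
  intro S hS
  rw [ShortComplex.moduleCat_exact_iff] at hS ⊢
  exact sum_exact_aux Λ S.f.hom S.g.hom hS

/-- Inclusion of a summand. -/
noncomputable def sumι (Λ : Type u) (l : Λ) (M : ModuleCat.{u} A) : M ⟶ (sumF Λ).obj M :=
  ModuleCat.ofHom (Finsupp.lsingle l)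

/-- Morphisms out of the direct sum. -/
noncomputable def sumDesc {Λ : Type u} {M N : ModuleCat.{u} A} (f : Λ → (M ⟶ N)) :
    (sumF Λ).obj M ⟶ N :=
  ModuleCat.ofHom (Finsupp.lsum ℕ fun l => (f l).hom)

lemma sum_hom_ext {Λ : Type u} {M N : ModuleCat.{u} A} {f g : (sumF Λ).obj M ⟶ N}
    (h : ∀ l, sumι Λ l M ≫ f = sumι Λ l M ≫ g) : f = g := by
  ext : 1
  refine Finsupp.lhom_ext' fun l => ?_
  exact congrArg ModuleCat.Hom.hom (h l)

lemma sumι_desc {Λ : Type u} {M N : ModuleCat.{u} A} (f : Λ → (M ⟶ N)) (l : Λ) :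
    sumι Λ l M ≫ sumDesc f = f l := by
  ext : 1
  refine LinearMap.ext fun x => ?_
  change (Finsupp.lsum ℕ fun l => (f l).hom) (Finsupp.single l x) = _
  simp

lemma sumι_desc_assoc {Λ : Type u} {M N : ModuleCat.{u} A} (f : Λ → (M ⟶ N)) (l : Λ)
    {Z : ModuleCat.{u} A} (h : N ⟶ Z) : sumι Λ l M ≫ sumDesc f ≫ h = f l ≫ h := by
  rw [← Category.assoc, sumι_desc]

lemma sumι_map {Λ : Type u} {M N : ModuleCat.{u} A} (f : M ⟶ N) (l : Λ) :
    sumι Λ l M ≫ (sumF Λ).map f = f ≫ sumι Λ l N := by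
  ext : 1
  refine LinearMap.ext fun x => ?_
  change Finsupp.mapRange f.hom (map_zero _) (Finsupp.single l x) = Finsupp.single l (f.hom x)
  simp

lemma sum_projective (Λ : Type u) (M : ModuleCat.{u} A) [Projective M] :
    Projective ((sumF Λ).obj M) where
  factors {E X} f e _ := by
    refine ⟨sumDesc fun l => Projective.factorThru (sumι Λ l M ≫ f) e, ?_⟩
    refine sum_hom_ext fun l => ?_
    rw [sumι_desc_assoc, Projective.factorThru_comp]

/-- The direct sum of copies of a complex. -/
noncomputable abbrev sumC (Λ : Type u) (K : CochainComplex (ModuleCat.{u} A) ℤ) :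
    CochainComplex (ModuleCat.{u} A) ℤ :=
  ((sumF Λ).mapHomologicalComplex (ComplexShape.up ℤ)).obj K

/-- Inclusion of a summand, for complexes. -/
noncomputable def sumCι (Λ : Type u) (l : Λ) (K : CochainComplex (ModuleCat.{u} A) ℤ) :
    K ⟶ sumC Λ K where
  f i := sumι Λ l (K.X i)
  comm' i j _ := by
    exact sumι_map (K.d i j) l

/-- Morphisms out of a component of a direct sum of complexes. -/
noncomputable def sumXDesc {Λ : Type u} {K : CochainComplex (ModuleCat.{u} A) ℤ} {i : ℤ}
    {N : ModuleCat.{u} A} (f : Λ → (K.X i ⟶ N)) : (sumC Λ K).X i ⟶ N :=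
  sumDesc f

lemma sumX_hom_ext {Λ : Type u} {K : CochainComplex (ModuleCat.{u} A) ℤ} {i : ℤ}
    {N : ModuleCat.{u} A} {f g : (sumC Λ K).X i ⟶ N}
    (h : ∀ l, (sumCι Λ l K).f i ≫ f = (sumCι Λ l K).f i ≫ g) : f = g :=
  sum_hom_ext h

lemma sumXι_desc {Λ : Type u} {K : CochainComplex (ModuleCat.{u} A) ℤ} {i : ℤ}
    {N : ModuleCat.{u} A} (f : Λ → (K.X i ⟶ N)) (l : Λ) :
    (sumCι Λ l K).f i ≫ sumXDesc f = f l :=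
  sumι_desc f l

lemma sumXι_desc_assoc {Λ : Type u} {K : CochainComplex (ModuleCat.{u} A) ℤ} {i : ℤ}
    {N : ModuleCat.{u} A} (f : Λ → (K.X i ⟶ N)) (l : Λ) {Z : ModuleCat.{u} A} (h : N ⟶ Z) :
    (sumCι Λ l K).f i ≫ sumXDesc f ≫ h = f l ≫ h := by
  rw [← Category.assoc, sumXι_desc]

/-- Morphisms out of a direct sum, for complexes. -/
noncomputable def sumCDesc {Λ : Type u} {K L : CochainComplex (ModuleCat.{u} A) ℤ}
    (f : Λ → (K ⟶ L)) : sumC Λ K ⟶ L where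
  f i := sumXDesc fun l => (f l).f i
  comm' i j _ := by
    refine sumX_hom_ext fun l => ?_
    rw [sumXι_desc_assoc, HomologicalComplex.Hom.comm_assoc, sumXι_desc]
    exact (f l).comm i j

lemma sumCι_desc {Λ : Type u} {K L : CochainComplex (ModuleCat.{u} A) ℤ}
    (f : Λ → (K ⟶ L)) (l : Λ) : sumCι Λ l K ≫ sumCDesc f = f l := by
  ext1 i
  exact sumι_desc (fun l => (f l).f i) l

/-- A morphism out of a direct sum is null-homotopic if its components are. -/
noncomputable def sumHomotopy {Λ : Type u} {K L : CochainComplex (ModuleCat.{u} A) ℤ}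
    (f : sumC Λ K ⟶ L) (h : ∀ l, Homotopy (sumCι Λ l K ≫ f) 0) : Homotopy f 0 where
  hom i j := sumXDesc fun l => (h l).hom i j
  zero i j hij := by
    refine sumX_hom_ext fun l => ?_
    rw [sumXι_desc, (h l).zero i j hij, comp_zero]
  comm i := by
    refine sumX_hom_ext fun l => ?_
    have := (h l).comm i
    rw [dNext_eq _ (show (ComplexShape.up ℤ).Rel i (i+1) by simp),
      prevD_eq _ (show (ComplexShape.up ℤ).Rel (i-1) i by simp)] at this ⊢
    rw [Preadditive.comp_add, Preadditive.comp_add, HomologicalComplex.Hom.comm_assoc,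
      sumXι_desc, sumXι_desc_assoc, HomologicalComplex.zero_f, comp_zero]
    exact this

end sumFunctor

section derived

variable {A}

lemma exists_Q_map {K L : CochainComplex (ModuleCat.{u} A) ℤ} [K.IsKProjective]
    (f : Q.obj K ⟶ Q.obj L) : ∃ g : K ⟶ L, Q.map g = f := by
  obtain ⟨g, hg⟩ := (CochainComplex.IsKProjective.Qh_map_bijective K
    ((HomotopyCategory.quotient _ _).obj L)).surjective
    ((quotientCompQhIso _).hom.app K ≫ f ≫ (quotientCompQhIso _).inv.app L)
  obtain ⟨g, rfl⟩ := (HomotopyCategory.quotient _ _).map_surjective g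
  refine ⟨g, ?_⟩
  rw [← cancel_epi ((quotientCompQhIso _).hom.app K), ← quotientCompQhIso_hom_naturality, hg]
  simp

lemma Q_map_eq_zero_iff {K L : CochainComplex (ModuleCat.{u} A) ℤ} [K.IsKProjective]
    (g : K ⟶ L) : Q.map g = 0 ↔ Nonempty (Homotopy g 0) := by
  constructor
  · intro h
    refine ⟨HomotopyCategory.homotopyOfEq _ _ ?_⟩
    apply (CochainComplex.IsKProjective.Qh_map_bijective K
      ((HomotopyCategory.quotient _ _).obj L)).injective
    rw [← cancel_mono ((quotientCompQhIso _).hom.app L), quotientCompQhIso_hom_naturality, h]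
    simp
  · rintro ⟨h⟩
    rw [← cancel_epi ((quotientCompQhIso _).hom.app K), ← quotientCompQhIso_hom_naturality,
      HomotopyCategory.eq_of_homotopy _ _ h]
    simp

end derived

section construction

variable {A}
variable (P : CochainComplex (ModuleCat.{u} A) ℤ)

/-- `Hom(P[i], X) = 0` in the derived category. -/
def Van (i : ℤ) (X : DA A) : Prop := ∀ f : Q.obj (P⟦i⟧) ⟶ X, f = 0

lemma Van.of_iso {P} {i : ℤ} {X Y : DA A} (h : Van P i X) (e : X ≅ Y) : Van P i Y := by
  intro f
  rw [← cancel_mono e.inv, zero_comp]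
  exact h _

/-- The canonical map from a sum of copies of `P[k]`. -/
noncomputable def stepMap (k : ℤ) (C : CochainComplex (ModuleCat.{u} A) ℤ) :
    sumC (P⟦k⟧ ⟶ C) (P⟦k⟧) ⟶ C :=
  sumCDesc fun l => l

/-- One step of the construction. -/
noncomputable def step (k : ℤ) (C : CochainComplex (ModuleCat.{u} A) ℤ) :
    CochainComplex (ModuleCat.{u} A) ℤ :=
  CochainComplex.mappingCone (stepMap P k C)

/-- The inclusion in the next step. -/
noncomputable def stepIn (k : ℤ) (C : CochainComplex (ModuleCat.{u} A) ℤ) :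
    C ⟶ step P k C :=
  CochainComplex.mappingCone.inr (stepMap P k C)

/-- The iterated construction. -/
noncomputable def itr (s : ℤ) (X : CochainComplex (ModuleCat.{u} A) ℤ) :
    ℕ → CochainComplex (ModuleCat.{u} A) ℤ
  | 0 => X
  | k + 1 => step P (s + k) (itr s X k)

/-- The transition maps. -/
noncomputable def itrIn (s : ℤ) (X : CochainComplex (ModuleCat.{u} A) ℤ) (k : ℕ) :
    itr P s X k ⟶ itr P s X (k + 1) :=
  stepIn P (s + k) (itr P s X k)

lemma step_triangle (k : ℤ) (C : CochainComplex (ModuleCat.{u} A) ℤ) :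
    ∃ h : Q.obj (step P k C) ⟶ (Q.obj (sumC (P⟦k⟧ ⟶ C) (P⟦k⟧)))⟦(1 : ℤ)⟧,
      Triangle.mk (Q.map (stepMap P k C)) (Q.map (stepIn P k C)) h ∈ distTriang (DA A) :=
  ⟨_, DerivedCategory.mappingCone_triangle_distinguished (stepMap P k C)⟩

lemma van_step [P.IsKProjective] (k : ℤ) (C : CochainComplex (ModuleCat.{u} A) ℤ)
    (rigid : ∀ (Λ : Type u) (i : ℤ), i ≤ k → Van P i ((Q.obj (sumC Λ (P⟦k⟧)))⟦(1 : ℤ)⟧))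
    (hC : ∀ i < k, Van P i (Q.obj C)) : ∀ i ≤ k, Van P i (Q.obj (step P k C)) := by
  intro i hi f
  obtain ⟨h, hT⟩ := step_triangle P k C
  obtain ⟨g, hg⟩ : ∃ g : Q.obj (P⟦i⟧) ⟶ Q.obj C, f = g ≫ Q.map (stepIn P k C) :=
    Triangle.coyoneda_exact₃ _ hT f (rigid _ i hi _)
  rcases hi.lt_or_eq with hi | rfl
  · rw [hg, hC i hi g, zero_comp]
  · obtain ⟨l, rfl⟩ := exists_Q_map g
    have h0 : Q.map (stepMap P i C) ≫ Q.map (stepIn P i C) = 0 :=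
      comp_distTriang_mor_zero₁₂ _ hT
    rw [hg, ← sumCι_desc (fun l : P⟦i⟧ ⟶ C => l) l, Functor.map_comp, Category.assoc]
    erw [h0]
    rw [comp_zero]

lemma van_itr [P.IsKProjective]
    (rigid : ∀ (Λ : Type u) (i k : ℤ), i ≤ k → Van P i ((Q.obj (sumC Λ (P⟦k⟧)))⟦(1 : ℤ)⟧))
    (s : ℤ) (X : CochainComplex (ModuleCat.{u} A) ℤ)
    (hX : ∀ i < s, Van P i (Q.obj X)) (k : ℕ) :
    ∀ i < s + k, Van P i (Q.obj (itr P s X k)) := by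
  induction k with
  | zero => simpa [itr] using hX
  | succ k ih =>
    intro i hi
    exact van_step P (s + k) _ (fun Λ i => rigid Λ i _) ih i (by push_cast at hi; lia)

lemma isIso_stepIn (hP : ∀ i : ℤ, 0 < i → IsZero (P.X i)) (k : ℤ)
    (C : CochainComplex (ModuleCat.{u} A) ℤ) (j : ℤ) (hj : -k ≤ j) :
    IsIso ((stepIn P k C).f j) := by
  have hz : IsZero ((sumC (P⟦k⟧ ⟶ C) (P⟦k⟧)).X (j + 1)) :=
    Functor.map_isZero (sumF _) (show IsZero ((P⟦k⟧).X (j + 1)) from hP (j + 1 + k) (by lia))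
  refine ⟨(CochainComplex.mappingCone.snd (stepMap P k C)).v j j (add_zero j), ?_, ?_⟩
  · exact CochainComplex.mappingCone.inr_f_snd_v _ _
  · have := CochainComplex.mappingCone.id_X (stepMap P k C) j (j + 1) rfl
    rw [hz.eq_of_tgt ((CochainComplex.mappingCone.fst (stepMap P k C)).1.v j (j + 1) rfl) 0,
      zero_comp, zero_add] at this
    exact this

/-- The sequence as a functor. -/
noncomputable def itrF (s : ℤ) (X : CochainComplex (ModuleCat.{u} A) ℤ) :
    ℕ ⥤ CochainComplex (ModuleCat.{u} A) ℤ :=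
  Functor.ofSequence (itrIn P s X)

lemma itrF_const (hP : ∀ i : ℤ, 0 < i → IsZero (P.X i)) (s : ℤ)
    (X : CochainComplex (ModuleCat.{u} A) ℤ) (j : ℤ) (k : ℕ) (hk : -(s + k) ≤ j) :
    (itrF P s X ⋙ HomologicalComplex.eval _ _ j).IsEventuallyConstantFrom k := by
  have key : ∀ (m : ℕ), IsIso ((itrF P s X ⋙ HomologicalComplex.eval _ _ j).map
      (homOfLE (Nat.le_add_right k m))) := by
    intro m
    induction m with
    | zero =>
      have : homOfLE (Nat.le_add_right k 0) = 𝟙 k := rfl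
      rw [this, CategoryTheory.Functor.map_id]
      infer_instance
    | succ m ih =>
      have : homOfLE (Nat.le_add_right k (m + 1)) =
        homOfLE (Nat.le_add_right k m) ≫ homOfLE (Nat.le_add_right (k + m) 1) := rfl
      rw [this, Functor.map_comp]
      have h2 : IsIso ((itrF P s X ⋙ HomologicalComplex.eval _ _ j).map
          (homOfLE (Nat.le_add_right (k + m) 1))) := by
        have e : (itrF P s X).map (homOfLE (Nat.le_add_right (k + m) 1)) = itrIn P s X (k + m) :=
          Functor.ofSequence_map_homOfLE_succ _ _
        rw [Functor.comp_map, e]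
        exact isIso_stepIn P hP _ _ j (by push_cast; lia)
      exact IsIso.comp_isIso
  intro m f
  obtain ⟨m, rfl⟩ := Nat.exists_eq_add_of_le (leOfHom f)
  exact key m

/-- The colimit. -/
noncomputable def itrC (s : ℤ) (X : CochainComplex (ModuleCat.{u} A) ℤ) :
    CochainComplex (ModuleCat.{u} A) ℤ := colimit (itrF P s X)

/-- The map to the colimit. -/
noncomputable def itrι (s : ℤ) (X : CochainComplex (ModuleCat.{u} A) ℤ) (k : ℕ) :
    itr P s X k ⟶ itrC P s X := colimit.ι (itrF P s X) k

lemma isIso_itrι (hP : ∀ i : ℤ, 0 < i → IsZero (P.X i)) (s : ℤ)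
    (X : CochainComplex (ModuleCat.{u} A) ℤ) (j : ℤ) (k : ℕ) (hk : -(s + k) ≤ j) :
    IsIso ((itrι P s X k).f j) :=
  (itrF_const P hP s X j k hk).isIso_ι_of_isColimit
    (isColimitOfPreserves (HomologicalComplex.eval _ _ j) (colimit.isColimit (itrF P s X)))

/-- Lifting a morphism along a morphism which is an isomorphism in large degrees. -/
lemma exists_lift {K L M : CochainComplex (ModuleCat.{u} A) ℤ} (m : ℤ)
    (hK : ∀ j < m, IsZero (K.X j)) (φ : L ⟶ M) (hφ : ∀ j, m ≤ j → IsIso (φ.f j)) (g : K ⟶ M) :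
    ∃ g' : K ⟶ L, g' ≫ φ = g := by
  have ex : ∀ j, ∃ a : K.X j ⟶ L.X j, a ≫ φ.f j = g.f j := by
    intro j
    by_cases hj : m ≤ j
    · have := hφ j hj
      exact ⟨g.f j ≫ inv (φ.f j), by simp⟩
    · exact ⟨0, (hK j (by lia)).eq_of_src _ _⟩
  choose a ha using ex
  refine ⟨{ f := a, comm' := ?_ }, ?_⟩
  · intro i j hij
    by_cases hi : m ≤ i
    · have hj : m ≤ j := by
        have : i + 1 = j := hij
        lia
      have := hφ j hj
      rw [← cancel_mono (φ.f j), Category.assoc, Category.assoc, ha, ← φ.comm,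
        ← Category.assoc, ha, g.comm]
    · exact (hK i (by lia)).eq_of_src _ _
  · ext1 j
    exact ha j

theorem isLE_of_van [P.IsKProjective]
    (hP : ∀ i : ℤ, 0 < i → IsZero (P.X i)) (n : ℕ) (hP' : ∀ i : ℤ, i < -n → IsZero (P.X i))
    (rigid : ∀ (Λ : Type u) (i k : ℤ), i ≤ k → Van P i ((Q.obj (sumC Λ (P⟦k⟧)))⟦(1 : ℤ)⟧))
    (gen : ∀ X : DA A, (∀ i, Van P i X) → IsZero X)
    (s : ℤ) (X : DA A) (hX : ∀ i < s, Van P i X) : X.IsLE (-s) := by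
  obtain ⟨K, ⟨e⟩⟩ : ∃ K, Nonempty (Q.obj K ≅ X) := ⟨_, ⟨Q.objObjPreimageIso X⟩⟩
  suffices h : (Q.obj K).IsLE (-s) from TStructure.t.isLE_of_iso e _
  have hK : ∀ i < s, Van P i (Q.obj K) := fun i hi => (hX i hi).of_iso e.symm
  have hC : IsZero (Q.obj (itrC P s K)) := by
    refine gen _ fun i f => ?_
    obtain ⟨g, rfl⟩ := exists_Q_map f
    obtain ⟨k, hk⟩ : ∃ k : ℕ, i < s + k ∧ n + i ≤ s + k := ⟨(n + 1 + i - s).toNat, by lia⟩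
    obtain ⟨g', rfl⟩ := exists_lift (K := P⟦i⟧) (-(s + k)) (fun j hj => hP' (j + i) (by lia))
      (itrι P s K k) (fun j hj => isIso_itrι P hP s K j k hj) g
    rw [Functor.map_comp, van_itr P rigid s K hK k i hk.1 (Q.map g'), zero_comp]
  rw [isLE_Q_obj_iff, CochainComplex.isLE_iff]
  intro i hi
  have h0 : QuasiIsoAt (itrι P s K 0) i := by
    rw [quasiIsoAt_iff' _ (i - 1) i (i + 1) (by simp) (by simp)]
    let φ := (HomologicalComplex.shortComplexFunctor' _ _ (i - 1) i (i + 1)).map (itrι P s K 0)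
    have : IsIso φ.τ₁ := isIso_itrι P hP s K (i - 1) 0 (by push_cast; lia)
    have : IsIso φ.τ₂ := isIso_itrι P hP s K i 0 (by push_cast; lia)
    have : IsIso φ.τ₃ := isIso_itrι P hP s K (i + 1) 0 (by push_cast; lia)
    exact ShortComplex.quasiIso_of_epi_of_isIso_of_mono φ
  rw [HomologicalComplex.exactAt_iff_isZero_homology]
  have h1 : IsZero ((itrC P s K).homology i) :=
    (Functor.map_isZero (homologyFunctor _ i) hC).of_iso
      ((homologyFunctorFactors _ i).symm.app (itrC P s K))
  have h2 : IsIso (HomologicalComplex.homologyMap (itrι P s K 0) i) :=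
    (quasiIsoAt_iff_isIso_homologyMap _ _).1 h0
  exact h1.of_iso (@asIso _ _ _ _ (HomologicalComplex.homologyMap (itrι P s K 0) i) h2)

/-- Vanishing of morphisms from a sum. -/
lemma hom_sum_eq_zero [∀ i, Projective (P.X i)] [P.IsKProjective]
    (hP : ∀ i : ℤ, 0 < i → IsZero (P.X i)) (Λ : Type u) (k : ℤ)
    (X : DA A) (hX : Van P k X) (f : Q.obj (sumC Λ (P⟦k⟧)) ⟶ X) : f = 0 := by
  obtain ⟨K, ⟨e⟩⟩ : ∃ K, Nonempty (Q.obj K ≅ X) := ⟨_, ⟨Q.objObjPreimageIso X⟩⟩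
  have h1 : ∀ i, Projective ((sumC Λ (P⟦k⟧)).X i) := fun i => by
    have : Projective ((P⟦k⟧).X i) := inferInstanceAs (Projective (P.X (i + k)))
    exact sum_projective Λ ((P⟦k⟧).X i)
  have h2 : (sumC Λ (P⟦k⟧)).IsStrictlyLE (-k) := by
    rw [CochainComplex.isStrictlyLE_iff]
    intro i hi
    exact Functor.map_isZero (sumF Λ) (show IsZero ((P⟦k⟧).X i) from hP (i + k) (by lia))
  have h3 : (sumC Λ (P⟦k⟧)).IsKProjective := CochainComplex.isKProjective_of_projective _ (-k)
  rw [← cancel_mono e.inv, zero_comp]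
  obtain ⟨g, hg⟩ := exists_Q_map (f ≫ e.inv)
  rw [← hg, Q_map_eq_zero_iff]
  have h4 : ∀ l, Nonempty (Homotopy (sumCι Λ l (P⟦k⟧) ≫ g) 0) := fun l => by
    rw [← Q_map_eq_zero_iff]
    exact hX.of_iso e.symm _
  exact ⟨sumHomotopy g fun l => (h4 l).some⟩

lemma exists_factor [∀ i, Projective (P.X i)] [P.IsKProjective]
    (hP : ∀ i : ℤ, 0 < i → IsZero (P.X i)) (s : ℤ)
    (X : DA A) (hX : ∀ i, s ≤ i → Van P i X) (K : CochainComplex (ModuleCat.{u} A) ℤ)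
    (f : Q.obj K ⟶ X) (k : ℕ) :
    ∃ (a : Q.obj K ⟶ Q.obj (itr P s K k)) (b : Q.obj (itr P s K k) ⟶ X), a ≫ b = f := by
  induction k with
  | zero => exact ⟨𝟙 _, f, Category.id_comp _⟩
  | succ k ih =>
    obtain ⟨a, b, rfl⟩ := ih
    obtain ⟨h, hT⟩ := step_triangle P (s + k) (itr P s K k)
    obtain ⟨c, hc⟩ : ∃ c : Q.obj (itr P s K (k + 1)) ⟶ X, b = Q.map (itrIn P s K k) ≫ c :=
      Triangle.yoneda_exact₂ _ hT b (hom_sum_eq_zero P hP _ _ X (hX _ (by lia)) _)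
    refine ⟨a ≫ Q.map (itrIn P s K k), c, ?_⟩
    rw [hc, Category.assoc]

lemma van_of_isLE [P.IsKProjective] (n : ℕ) (hP' : ∀ i : ℤ, i < -n → IsZero (P.X i))
    (i m : ℤ) (hm : m < -n - i) (X : DA A) [X.IsLE m] : Van P i X := by
  obtain ⟨K, hK, ⟨e⟩⟩ := X.exists_iso_Q_obj_of_isLE m
  refine Van.of_iso (fun f => ?_) e.symm
  obtain ⟨g, rfl⟩ := exists_Q_map f
  suffices g = 0 by rw [this, Functor.map_zero]
  ext1 j
  by_cases hj : m < j
  · exact (K.isZero_of_isStrictlyLE m j hj).eq_of_tgt _ _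
  · exact (hP' (j + i) (by lia) : IsZero ((P⟦i⟧).X j)).eq_of_src _ _

theorem isGE_of_van [∀ i, Projective (P.X i)] [P.IsKProjective]
    (hP : ∀ i : ℤ, 0 < i → IsZero (P.X i)) (n : ℕ) (hP' : ∀ i : ℤ, i < -n → IsZero (P.X i))
    (rigid : ∀ (Λ : Type u) (i k : ℤ), i ≤ k → Van P i ((Q.obj (sumC Λ (P⟦k⟧)))⟦(1 : ℤ)⟧))
    (gen : ∀ X : DA A, (∀ i, Van P i X) → IsZero X)
    (X : DA A) (hX : ∀ i, 0 < i → Van P i X) : X.IsGE (-n) := by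
  obtain ⟨Y, Z, hY, hZ, f, g, h, hT⟩ := TStructure.t.exists_triangle X (-n - 1) (-n) (by lia)
  have hY : Y.IsLE (-n - 1) := ⟨hY⟩
  have hZ : Z.IsGE (-n) := ⟨hZ⟩
  obtain ⟨K, ⟨e⟩⟩ : ∃ K, Nonempty (Q.obj K ≅ Y) := ⟨_, ⟨Q.objObjPreimageIso Y⟩⟩
  have hK : ∀ i < 1, Van P i (Q.obj K) := fun i hi =>
    (van_of_isLE P n hP' i (-n - 1) (by lia) Y).of_iso e.symm
  have hY0 : IsZero Y := by
    refine gen _ fun i p => ?_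
    obtain ⟨k, hk⟩ : ∃ k : ℕ, i < 1 + k ∧ n ≤ k := ⟨n + i.toNat, by lia⟩
    obtain ⟨a, b, hab⟩ := exists_factor P hP 1 X (fun i hi => hX i (by lia)) K (e.hom ≫ f) k
    have hv := van_itr P rigid 1 K hK k
    have hle : (Q.obj (itr P 1 K k)).IsLE (-(1 + k)) :=
      isLE_of_van P hP n hP' rigid gen (1 + k) _ hv
    have hle' : (Q.obj (itr P 1 K k)).IsLE (-n - 1) :=
      TStructure.t.isLE_of_le _ (-(1 + k)) (-n - 1) (by lia)
    have hbg : b ≫ g = 0 := TStructure.t.zero (b ≫ g) (-n - 1) (-n) (by lia)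
    obtain ⟨c, hc⟩ : ∃ c : Q.obj (itr P 1 K k) ⟶ Y, b = c ≫ f :=
      Triangle.coyoneda_exact₂ _ hT b hbg
    have hid : e.inv ≫ a ≫ c = 𝟙 Y := by
      rw [← sub_eq_zero]
      have hz : (e.inv ≫ a ≫ c - 𝟙 Y) ≫ f = 0 := by
        rw [Preadditive.sub_comp, Category.assoc, Category.assoc, ← hc, hab]
        simp
      obtain ⟨d, hd⟩ := Triangle.coyoneda_exact₂ _ (inv_rot_of_distTriang _ hT) _ hz
      have hZ' : (Z⟦(-1 : ℤ)⟧).IsGE (-n + 1) := TStructure.t.isGE_shift Z (-n) (-1) (-n + 1)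
      have : d = 0 := TStructure.t.zero_of_isLE_of_isGE d (-n - 1) (-n + 1) (by lia) hY hZ'
      exact hd.trans (by rw [this]; exact zero_comp)
    have := hv i hk.1 (p ≫ e.inv ≫ a)
    rw [← Category.comp_id p, ← hid]
    simp only [← Category.assoc] at this ⊢
    rw [this, zero_comp]
  have : IsIso g := (Triangle.isZero₁_iff_isIso₂ _ hT).1 hY0
  exact TStructure.t.isGE_of_iso (asIso g).symm _

end construction

section final

variable {A}

lemma van_iff (P : CochainComplex (ModuleCat.{u} A) ℤ) (U : DA A) (e : U ≅ Q.obj P)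
    (i j : ℤ) (hij : i + j = 0) (X : DA A) :
    Van P i X ↔ ∀ f : U ⟶ X⟦j⟧, f = 0 := by
  let adj := (shiftEquiv' (DA A) i j hij).toAdjunction
  let E : Q.obj (P⟦i⟧) ≅ (shiftFunctor (DA A) i).obj U :=
    (Q.commShiftIso i).app P ≪≫ (shiftFunctor (DA A) i).mapIso e.symm
  let Φ : ((shiftFunctor (DA A) i).obj U ⟶ X) ≃ (U ⟶ (shiftFunctor (DA A) j).obj X) :=
    adj.homEquiv U X
  have hΦ : Φ 0 = 0 := by
    have := adj.homEquiv_unit U X 0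
    refine this.trans ?_
    exact (congrArg _ (Functor.map_zero (shiftFunctor (DA A) j) _ _)).trans comp_zero
  constructor
  · intro h f
    obtain ⟨g, rfl⟩ := Φ.surjective f
    have hg : E.hom ≫ g = 0 := h _
    have : g = 0 := by rw [← cancel_epi E.hom, hg, comp_zero]
    rw [this, hΦ]
  · intro h f
    have h1 : Φ (E.inv ≫ f) = Φ 0 := by rw [h (Φ _), hΦ]
    have h2 := Φ.injective h1
    rw [← cancel_epi E.inv, h2, comp_zero]

variable (T : Type u) [AddCommGroup T] [Module A T]

/-- `T` is isomorphic to its projective resolution. -/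
noncomputable def isoRes (pr : ProjectiveResolution (ModuleCat.of A T)) :
    Tsingle A T ≅ Q.obj pr.cochainComplex :=
  (singleFunctorIsoCompQ (ModuleCat.{u} A) 0).app (ModuleCat.of A T) ≪≫
    (asIso (Q.map pr.π')).symm

/-- The direct sum of copies of the resolution. -/
noncomputable def sumRes (pr : ProjectiveResolution (ModuleCat.of A T)) (Λ : Type u) :
    Q.obj (sumC Λ pr.cochainComplex) ≅
      (singleFunctor (ModuleCat.{u} A) 0).obj (ModuleCat.of A (Λ →₀ T)) :=
  have : QuasiIso (((sumF Λ).mapHomologicalComplex (ComplexShape.up ℤ)).map pr.π') :=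
    inferInstance
  (asIso (Q.map (((sumF Λ).mapHomologicalComplex (ComplexShape.up ℤ)).map pr.π'))) ≪≫
    Q.mapIso ((HomologicalComplex.singleMapHomologicalComplex (sumF Λ) (ComplexShape.up ℤ) 0).app
      (ModuleCat.of A T)) ≪≫
    ((singleFunctorIsoCompQ (ModuleCat.{u} A) 0).app (ModuleCat.of A (Λ →₀ T))).symm

/-- Direct sums commute with shifts. -/
noncomputable def sumShift (P : CochainComplex (ModuleCat.{u} A) ℤ) (Λ : Type u) (k : ℤ) :
    Q.obj (sumC Λ (P⟦k⟧)) ≅ (Q.obj (sumC Λ P))⟦k⟧ :=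
  Q.mapIso (((sumF Λ).mapCochainComplexShiftIso k).app P) ≪≫ (Q.commShiftIso k).app (sumC Λ P)

lemma main (n : ℕ) (hT : IsTilting A T n) :
    (∀ X : DA A, dLE A (-(n : ℤ)) X → tLE A T 0 X) ∧
    (∀ X : DA A, tLE A T 0 X → dLE A 0 X) ∧
    (∀ X : DA A, dGE A 0 X → tGE A T 0 X) ∧
    (∀ X : DA A, tGE A T 0 X → dGE A (-(n : ℤ)) X) := by
  obtain ⟨pr, hpr⟩ := hT.pdim
  have hP : ∀ i : ℤ, 0 < i → IsZero (pr.cochainComplex.X i) := fun i hi =>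
    pr.cochainComplex.isZero_of_isStrictlyLE 0 i hi
  have hP' : ∀ i : ℤ, i < -n → IsZero (pr.cochainComplex.X i) := fun i hi => by
    obtain ⟨k, rfl⟩ : ∃ k : ℕ, i = -k := ⟨i.natAbs, by lia⟩
    exact (hpr k (by lia)).of_iso (pr.cochainComplexXIso (-k) k)
  have viff := van_iff pr.cochainComplex (Tsingle A T) (isoRes T pr)
  have gen : ∀ X : DA A, (∀ i, Van pr.cochainComplex i X) → IsZero X := fun X hX =>
    hT.generates X fun i => (viff (-i) i (by lia) X).1 (hX _)
  have rigid : ∀ (Λ : Type u) (i k : ℤ), i ≤ k →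
      Van pr.cochainComplex i ((Q.obj (sumC Λ (pr.cochainComplex⟦k⟧)))⟦(1 : ℤ)⟧) := by
    intro Λ i k hik
    let S : DA A := (singleFunctor (ModuleCat.{u} A) 0).obj (ModuleCat.of A (Λ →₀ T))
    have e1 : S⟦k⟧ ≅ Q.obj (sumC Λ (pr.cochainComplex⟦k⟧)) :=
      (shiftFunctor (DA A) k).mapIso (sumRes T pr Λ).symm ≪≫
        (sumShift pr.cochainComplex Λ k).symm
    refine Van.of_iso ?_ ((shiftFunctor (DA A) (1 : ℤ)).mapIso e1)
    rw [viff i (-i) (by lia)]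
    obtain ⟨j, hj⟩ : ∃ j : ℕ, (j : ℤ) = k + 1 - i := ⟨(k + 1 - i).toNat, by lia⟩
    have e2 : S⟦(j : ℤ)⟧ ≅ ((S⟦k⟧)⟦(1 : ℤ)⟧)⟦-i⟧ :=
      (shiftFunctorAdd' (DA A) (k + 1) (-i) j (by lia)).app S ≪≫
        (shiftFunctor (DA A) (-i)).mapIso ((shiftFunctorAdd' (DA A) k 1 (k + 1) rfl).app S)
    have key : ∀ f : Tsingle A T ⟶ S⟦(j : ℤ)⟧, f = 0 := by
      by_cases hjn : j ≤ n
      · have := hT.rigid j (by lia) hjn Λ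
        intro f
        exact (Abelian.Ext.homEquiv (X := ModuleCat.of A T)
          (Y := ModuleCat.of A (Λ →₀ T)) (n := j)).symm.subsingleton.elim f 0
      · refine (viff (-j) j (by lia) S).1 ?_
        have : S.IsLE 0 := inferInstanceAs
          (((singleFunctor (ModuleCat.{u} A) 0).obj (ModuleCat.of A (Λ →₀ T))).IsLE 0)
        exact van_of_isLE pr.cochainComplex n hP' (-j) 0 (by lia) S
    intro f
    rw [← cancel_mono e2.inv, zero_comp]
    exact key _
  refine ⟨fun X hX i hi => ?_, fun X hX => ?_, fun X hX i hi f => ?_, fun X hX => ?_⟩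
  · have : X.IsLE (-n) := (DerivedCategory.isLE_iff X _).2 hX
    exact (viff (-i) i (by lia) X).1 (van_of_isLE pr.cochainComplex n hP' (-i) (-n) (by lia) X)
  · have := isLE_of_van pr.cochainComplex hP n hP' rigid gen 0 X fun i hi =>
      (viff i (-i) (by lia) X).2 (hX _ (by lia))
    rw [neg_zero] at this
    exact (DerivedCategory.isLE_iff X _).1 this
  · have h1 : X.IsGE 0 := (DerivedCategory.isGE_iff X _).2 hX
    have h2 : TStructure.t.IsGE (X⟦i⟧) (-i) := TStructure.t.isGE_shift X 0 i (-i)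
    have h3 : TStructure.t.IsLE (Tsingle A T) 0 := inferInstanceAs
      (((singleFunctor (ModuleCat.{u} A) 0).obj (ModuleCat.of A T)).IsLE 0)
    exact TStructure.t.zero_of_isLE_of_isGE f 0 (-i) (by lia) h3 h2
  · have := isGE_of_van pr.cochainComplex hP n hP' rigid gen X fun i hi =>
      (viff i (-i) (by lia) X).2 (hX _ (by lia))
    exact (DerivedCategory.isGE_iff X _).1 this

end final
end TiltAux

/-- For an `n`-tilting module `T`, the associated
t-structure satisfies `D^{≤-n} ⊆ T^{≤0} ⊆ D^{≤0}` and
`D^{≥0} ⊆ T^{≥0} ⊆ D^{≥-n}`. -/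
theorem stmt15 (n : ℕ) (hT : IsTilting A T n) :
    (∀ X : DA A, dLE A (-(n : ℤ)) X → tLE A T 0 X) ∧
    (∀ X : DA A, tLE A T 0 X → dLE A 0 X) ∧
    (∀ X : DA A, dGE A 0 X → tGE A T 0 X) ∧
    (∀ X : DA A, tGE A T 0 X → dGE A (-(n : ℤ)) X) := by
  exact TiltAux.main T n hT
end

section
/- Let A be an associative unital ring, T a 1-tilting left A-module and (T^{≤0}, T^{≥0}) the associated t-structure on D(A). If X ∈ T^{≤0}, then the usual zeroth cohomology module H^0(X) of the complex X satisfies Ext_A^1(T, H^0(X)) = 0. -/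
set_option maxHeartbeats 1000000
set_option synthInstance.maxHeartbeats 400000
open CategoryTheory Limits Triangulated Pretriangulated
universe u
variable (A : Type u) [Ring A]
variable (T : Type u) [AddCommGroup T] [Module A T]

open DerivedCategory DerivedCategory.TStructure in
/-- A module with a projective resolution of length at most one has no nonzero maps in `D(A)`
to objects of `D^{≤-2}`. -/
lemma stmt16_aux_pd (hT : IsTilting A T 1) (Y : DA A) (hY : t.IsLE Y (-2))
    (f : Tsingle A T ⟶ Y) : f = 0 := by
  obtain ⟨R, hR⟩ := hT.pdim
  obtain ⟨L, hL, ⟨e⟩⟩ := exists_iso_Q_obj_of_isLE Y (-2)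
  have key : ∀ g : Q.obj R.cochainComplex ⟶ Q.obj L, g = 0 := by
    intro g
    obtain ⟨g', hg'⟩ := (CochainComplex.IsKProjective.Qh_map_bijective R.cochainComplex
      ((HomotopyCategory.quotient _ _).obj L)).surjective
        ((quotientCompQhIso _).hom.app R.cochainComplex ≫ g ≫ (quotientCompQhIso _).inv.app L)
    obtain ⟨g'', rfl⟩ := (HomotopyCategory.quotient _ _).map_surjective g'
    have h0 : g'' = 0 := by
      ext1 i
      by_cases hi : -2 < i
      · exact (L.isZero_of_isStrictlyLE (-2) i hi).eq_of_tgt _ _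
      · obtain ⟨n, hn⟩ := Int.eq_ofNat_of_zero_le (show 0 ≤ -i by lia)
        exact ((hR n (by lia)).of_iso
          (R.cochainComplexXIso i n (by lia))).eq_of_src _ _
    rw [h0, Functor.map_zero, Functor.map_zero] at hg'
    have h1 := hg'.symm
    rw [← cancel_epi ((quotientCompQhIso _).hom.app R.cochainComplex),
      ← cancel_mono ((quotientCompQhIso _).inv.app L), Category.assoc, h1]
    simp
  let e' : Q.obj R.cochainComplex ≅ Tsingle A T :=
    asIso (Q.map R.π') ≪≫ ((singleFunctorIsoCompQ (ModuleCat.{u} A) 0).app _).symm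
  have h2 := key (e'.hom ≫ f ≫ e.hom)
  rw [← cancel_epi e'.hom, ← cancel_mono e.hom, Category.assoc, h2]
  simp

open DerivedCategory DerivedCategory.TStructure in
theorem stmt16 (hT : IsTilting A T 1) (X : DA A) (hX : tLE A T 0 X) :
    Subsingleton (Abelian.Ext (ModuleCat.of A T)
      ((DerivedCategory.homologyFunctor (ModuleCat.{u} A) 0).obj X) 1) := by
  obtain ⟨X', X'', hX', hX'', f₁, f₂, f₃, hf⟩ := t.exists_triangle X 0 1 (by lia)
  obtain ⟨Z, W, hZ, hW, g₁, g₂, g₃, hg⟩ := t.exists_triangle X' (-1) 0 (by lia)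
  have : t.IsLE X' 0 := ⟨hX'⟩
  have : t.IsGE X'' 1 := ⟨hX''⟩
  have : t.IsLE Z (-1) := ⟨hZ⟩
  have : t.IsGE W 0 := ⟨hW⟩
  have : t.IsLE W 0 := by
    change W.IsLE 0
    rw [DerivedCategory.isLE_iff]
    intro i hi
    refine (HomologySequence.exact₃ _ hg i (i + 1) rfl).isZero_of_both_zeros ?_ ?_
    · exact (isZero_of_isLE X' 0 i hi).eq_of_src _ _
    · exact (isZero_of_isLE Z (-1) (i + 1) (by lia)).eq_of_tgt _ _
  have : IsIso ((homologyFunctor (ModuleCat.{u} A) 0).map f₁) := by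
    have : Epi ((homologyFunctor (ModuleCat.{u} A) 0).map f₁) :=
      (HomologySequence.epi_homologyMap_mor₁_iff _ hf 0).2
        ((isZero_of_isGE X'' 1 0 (by lia)).eq_of_tgt _ _)
    have : Mono ((homologyFunctor (ModuleCat.{u} A) 0).map f₁) :=
      (HomologySequence.mono_homologyMap_mor₁_iff _ hf (-1) 0 (by lia)).2
        ((isZero_of_isGE X'' 1 (-1) (by lia)).eq_of_src _ _)
    exact isIso_of_mono_of_epi _
  have : IsIso ((homologyFunctor (ModuleCat.{u} A) 0).map g₂) := by
    have : Epi ((homologyFunctor (ModuleCat.{u} A) 0).map g₂) :=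
      (HomologySequence.epi_homologyMap_mor₂_iff _ hg 0 1 (by lia)).2
        ((isZero_of_isLE Z (-1) 1 (by lia)).eq_of_tgt _ _)
    have : Mono ((homologyFunctor (ModuleCat.{u} A) 0).map g₂) :=
      (HomologySequence.mono_homologyMap_mor₂_iff _ hg 0).2
        ((isZero_of_isLE Z (-1) 0 (by lia)).eq_of_src _ _)
    exact isIso_of_mono_of_epi _
  obtain ⟨M, ⟨eW⟩⟩ := exists_iso_singleFunctor_obj_of_isGE_of_isLE W 0
  let eM : (homologyFunctor (ModuleCat.{u} A) 0).obj X ≅ M :=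
    (asIso ((homologyFunctor (ModuleCat.{u} A) 0).map f₁)).symm ≪≫
      asIso ((homologyFunctor (ModuleCat.{u} A) 0).map g₂) ≪≫
      (homologyFunctor (ModuleCat.{u} A) 0).mapIso eW ≪≫
      (singleFunctorCompHomologyFunctorIso (ModuleCat.{u} A) 0).app M
  let e : (singleFunctor (ModuleCat.{u} A) 0).obj
      ((homologyFunctor (ModuleCat.{u} A) 0).obj X) ≅ W :=
    (singleFunctor (ModuleCat.{u} A) 0).mapIso eM ≪≫ eW.symm
  -- vanishing of `Hom(T, W[1])`
  have hW1 : ∀ φ : Tsingle A T ⟶ W⟦(1 : ℤ)⟧, φ = 0 := by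
    intro φ
    have hZ1 : t.IsLE (Z⟦(1 : ℤ)⟧) (-2) := t.isLE_shift Z (-1) 1 (-2)
    have hZ2 : t.IsLE (Z⟦(1 : ℤ)⟧⟦(1 : ℤ)⟧) (-3) := t.isLE_shift _ (-2) 1 (-3)
    have hZ3 : t.IsLE (Z⟦(1 : ℤ)⟧⟦(1 : ℤ)⟧) (-2) := t.isLE_of_le _ (-3) (-2)
    obtain ⟨ψ, hψ⟩ := Triangle.coyoneda_exact₁ _
      (rot_of_distTriang _ (rot_of_distTriang _ hg)) φ
      (stmt16_aux_pd A T hT _ hZ3 _)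
    obtain ⟨k, hk⟩ := Triangle.coyoneda_exact₁ _ hf ψ (hX 1 (by lia) _)
    have hTle : t.IsLE (Tsingle A T) 0 :=
      inferInstanceAs (((singleFunctor (ModuleCat.{u} A) 0).obj (ModuleCat.of A T)).IsLE 0)
    have hk0 : k = 0 := t.zero_of_isLE_of_isGE k 0 1 (by lia) hTle ‹t.IsGE X'' 1›
    have hψ0 : ψ = 0 := by
      rw [hk, hk0]
      exact zero_comp
    rw [hψ, hψ0]
    exact zero_comp
  have hS : Subsingleton (ShiftedHom
      ((singleFunctor (ModuleCat.{u} A) 0).obj (ModuleCat.of A T))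
      ((singleFunctor (ModuleCat.{u} A) 0).obj
        ((homologyFunctor (ModuleCat.{u} A) 0).obj X)) ((1 : ℕ) : ℤ)) := by
    have h0 : ∀ φ : (singleFunctor (ModuleCat.{u} A) 0).obj (ModuleCat.of A T) ⟶
      ((singleFunctor (ModuleCat.{u} A) 0).obj
        ((homologyFunctor (ModuleCat.{u} A) 0).obj X))⟦(1 : ℤ)⟧, φ = 0 := by
      intro φ
      have := hW1 (φ ≫ e.hom⟦(1 : ℤ)⟧')
      rw [← cancel_mono (e.hom⟦(1 : ℤ)⟧'), zero_comp]
      exact this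
    exact ⟨fun a b => (h0 a).trans (h0 b).symm⟩
  exact (Abelian.Ext.homEquiv).subsingleton
end
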